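/- Suppose n is odd. Then there is an isomorphism of 𝔽₂-algebras P^τ/(ε̄₁) ≅ 𝔽₂[e₂, …, e_s, x]/(e₂^{2^{k₂−1}}, e₃^{2^{k₃}}, …, e_s^{2^{k_s}}, x²), where (ε̄₁) denotes the ideal of P^τ generated by ε̄₁, sending e₂ to the class of ε̄₂² + ε̄₁ε̄₂, e_i to the class of ε̄_i + ε̄₁^{2i−4}ε̄₂ for 3 ≤ i ≤ s, and x to the class of ε̄₁^{n−1}ε̄₂. -/

import Mathlib

open MvPolynomial

set_option synthInstance.maxHeartbeats 1000000
set_option maxHeartbeats 1000000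

noncomputable section

/-- The ideal `(ε₁ⁿ, ε₂^{2^{k₂}}, …, ε_s^{2^{k_s}})` of `𝔽₂[ε₁,…,ε_s]`, where
`s = n/2 + 1` and the variable of index `i : Fin (n/2+1)` is `ε_{i+1}`. -/
def relIdealP (n : ℕ) (k : ℕ → ℕ) : Ideal (MvPolynomial (Fin (n / 2 + 1)) (ZMod 2)) :=
  Ideal.span (Set.range fun i : Fin (n / 2 + 1) =>
    X i ^ (if (i : ℕ) = 0 then n else 2 ^ k ((i : ℕ) + 1)))

/-- `P = 𝔽₂[ε₁,…,ε_s]/(ε₁ⁿ, ε₂^{2^{k₂}}, …, ε_s^{2^{k_s}})` with `s = n/2 + 1`. -/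
abbrev P (n : ℕ) (k : ℕ → ℕ) : Type :=
  MvPolynomial (Fin (n / 2 + 1)) (ZMod 2) ⧸ relIdealP n k

/-- `ε̄_{i+1}`, the class in `P` of the variable of index `i`. -/
def eps (n : ℕ) (k : ℕ → ℕ) (i : Fin (n / 2 + 1)) : P n k :=
  Ideal.Quotient.mk _ (X i)

/-- The subalgebra `P^τ` of `τ`-invariant elements. -/
def Pfix (n : ℕ) (k : ℕ → ℕ) (τ : P n k →ₐ[ZMod 2] P n k) : Subalgebra (ZMod 2) (P n k) :=
  AlgHom.equalizer τ (AlgHom.id (ZMod 2) (P n k))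

end

noncomputable section

/-- The ideal `(e₂^{2^{k₂−1}}, e₃^{2^{k₃}}, …, e_s^{2^{k_s}}, x²)` of `𝔽₂[e₂,…,e_s,x]`,
where the variable of index `j < n/2` is `e_{j+2}` and the last variable
(index `n/2`) is `x`. -/
def relIdealOdd (n : ℕ) (k : ℕ → ℕ) : Ideal (MvPolynomial (Fin (n / 2 + 1)) (ZMod 2)) :=
  Ideal.span (Set.range fun j : Fin (n / 2 + 1) =>
    if (j : ℕ) = n / 2 then X j ^ 2
    else if (j : ℕ) = 0 then X j ^ 2 ^ (k 2 - 1)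
    else X j ^ 2 ^ k ((j : ℕ) + 2))

end

section CharTwo

variable {R : Type*} [CommRing R]

theorem add_pow_two_pow_of_two_eq_zero (h2 : (2 : R) = 0) (x y : R) (k : ℕ) :
    (x + y) ^ 2 ^ k = x ^ 2 ^ k + y ^ 2 ^ k := by
  induction k with
  | zero => simp
  | succ k ih =>
    simp only [pow_succ, pow_mul] at ih ⊢
    rw [ih]
    linear_combination x ^ 2 ^ k * y ^ 2 ^ k * h2

/-- Iterating `b² = (b² + ab) + ab` expresses `b^{2^{k+1}}` through `b² + ab` and the last term
`a^{2^{k+1}-1} b`, up to a multiple of `a` by an invariant element. -/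
theorem exists_pow_two_pow_succ_eq (h2 : (2 : R) = 0) {τ : R →+* R} {a b : R} (ha : τ a = a)
    (hb : τ b = b + a) (k : ℕ) :
    ∃ v, τ v = v ∧
      b ^ 2 ^ (k + 1) = (b ^ 2 + a * b) ^ 2 ^ k + a * v + a ^ (2 ^ (k + 1) - 1) * b := by
  induction k with
  | zero => exact ⟨0, map_zero τ, by linear_combination -(a * b) * h2⟩
  | succ k ih =>
    obtain ⟨v, hv, h⟩ := ih
    obtain ⟨t, ht⟩ : ∃ t, 2 ^ (k + 1) = t + 2 :=
      ⟨2 ^ (k + 1) - 2, by have := Nat.one_le_two_pow (n := k); rw [pow_succ]; omega⟩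
    have ht' : 2 ^ (k + 1 + 1) - 1 = 2 * t + 3 := by rw [pow_succ, ht]; omega
    refine ⟨a * v ^ 2 + a ^ (2 * t + 1) * (b ^ 2 + a * b), ?_, ?_⟩
    · simp only [map_add, map_mul, map_pow, ha, hb, hv]
      linear_combination a ^ (2 * t + 1) * (a * b + a ^ 2) * h2
    · rw [show b ^ 2 ^ (k + 1 + 1) = (b ^ 2 ^ (k + 1)) ^ 2 by rw [← pow_mul, ← pow_succ], h,
        show (b ^ 2 + a * b) ^ 2 ^ (k + 1) = ((b ^ 2 + a * b) ^ 2 ^ k) ^ 2 by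
          rw [← pow_mul, ← pow_succ], ht', ht, show t + 2 - 1 = t + 1 by omega]
      generalize (b ^ 2 + a * b) ^ 2 ^ k = U
      linear_combination
        (U * (a * v) + U * a ^ (t + 1) * b + a * v * a ^ (t + 1) * b - a ^ (2 * t + 3) * b) * h2

end CharTwo

section Monomials

variable {σ R : Type*} [CommRing R]

theorem mem_span_range_X_pow_iff (d : σ → ℕ) (f : MvPolynomial σ R) :
    f ∈ Ideal.span (Set.range fun i => (X i : MvPolynomial σ R) ^ d i) ↔
      ∀ m ∈ f.support, ∃ i, d i ≤ m i := by
  have h : (Set.range fun i => (X i : MvPolynomial σ R) ^ d i) =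
      (fun m => monomial m (1 : R)) '' Set.range fun i => Finsupp.single i (d i) := by
    rw [← Set.range_comp]
    exact congrArg Set.range (funext fun i => X_pow_eq_monomial)
  rw [h, mem_ideal_span_monomial_image]
  simp [Finsupp.single_le_iff]

/-- Substituting powers of a permutation of the variables sends the monomials of a polynomial
bijectively to those of its image. -/
theorem exists_mem_support_aeval_X_pow [Fintype σ] (e : Equiv.Perm σ) (w : σ → ℕ)
    (hw : ∀ i, w i ≠ 0) (f : MvPolynomial σ R) {m : σ →₀ ℕ} (hm : m ∈ f.support) :
    ∃ m' ∈ (aeval (R := R) (fun i => (X (e i) : MvPolynomial σ R) ^ w i) f).support,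
      ∀ i, m' (e i) = w i * m i := by
  classical
  let ρ : (σ →₀ ℕ) → (σ →₀ ℕ) := fun m =>
    Finsupp.equivFunOnFinite.symm fun i => w (e.symm i) * m (e.symm i)
  have hρ : ∀ m i, ρ m (e i) = w i * m i := fun m i => by simp [ρ]
  have hinj : Function.Injective ρ := fun m m' h => Finsupp.ext fun i =>
    Nat.eq_of_mul_eq_mul_left (Nat.pos_of_ne_zero (hw i)) (by rw [← hρ, ← hρ, h])
  have hmon : ∀ m (c : R), aeval (R := R) (fun i => (X (e i) : MvPolynomial σ R) ^ w i)
      (monomial m c) = monomial (ρ m) c := by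
    intro m c
    rw [aeval_monomial, monomial_eq, Finsupp.prod_fintype _ _ (fun i => pow_zero _),
      Finsupp.prod_fintype _ _ (fun i => pow_zero _),
      ← Equiv.prod_comp e fun i => (X i : MvPolynomial σ R) ^ ρ m i]
    simp only [hρ, pow_mul, algebraMap_eq]
  have hcoeff : ∀ f : MvPolynomial σ R,
      coeff (ρ m) (aeval (R := R) (fun i => (X (e i) : MvPolynomial σ R) ^ w i) f) =
        coeff m f := by
    intro f
    induction f using MvPolynomial.induction_on' with
    | monomial m' c => simp only [hmon, coeff_monomial, hinj.eq_iff]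
    | add p q hp hq => rw [map_add, coeff_add, coeff_add, hp, hq]
  exact ⟨ρ m, by rwa [mem_support_iff, hcoeff, ← mem_support_iff], hρ m⟩

end Monomials

section Quotient

variable {n : ℕ} {k : ℕ → ℕ}

theorem mk_mem_span_eps_zero_pow_iff {j : ℕ} (hj : j ≤ n)
    (f : MvPolynomial (Fin (n / 2 + 1)) (ZMod 2)) :
    (Ideal.Quotient.mk (relIdealP n k) f : P n k) ∈ Ideal.span {eps n k 0 ^ j} ↔
      ∀ m ∈ f.support, j ≤ m 0 ∨ ∃ i : Fin (n / 2 + 1), i ≠ 0 ∧ 2 ^ k ((i : ℕ) + 1) ≤ m i := by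
  constructor
  · intro h m hm
    obtain ⟨q, hq⟩ := Ideal.mem_span_singleton'.1 h
    obtain ⟨g, rfl⟩ := Ideal.Quotient.mk_surjective q
    rw [eps, ← map_pow, ← map_mul, eq_comm, Ideal.Quotient.eq] at hq
    by_contra! hcon
    have hg : coeff m (g * X 0 ^ j) = 0 := by
      rw [X_pow_eq_monomial, coeff_mul_monomial', if_neg]
      rw [Finsupp.single_le_iff]
      exact hcon.1.not_ge
    obtain ⟨i, hi⟩ := (mem_span_range_X_pow_iff _ _).1 hq m (by
      rw [mem_support_iff, coeff_sub, hg, sub_zero]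
      exact mem_support_iff.1 hm)
    split_ifs at hi with h0
    · have : i = 0 := Fin.ext h0
      subst this
      omega
    · exact (hcon.2 i fun h => h0 (by simp [h])).not_ge hi
  · intro h
    have hf : f ∈ Ideal.span (Set.range fun i : Fin (n / 2 + 1) =>
        (X i : MvPolynomial (Fin (n / 2 + 1)) (ZMod 2)) ^
          (if i = 0 then j else 2 ^ k ((i : ℕ) + 1))) := by
      rw [mem_span_range_X_pow_iff]
      intro m hm
      rcases h m hm with h | ⟨i, hi, h⟩
      · exact ⟨0, by simpa using h⟩
      · exact ⟨i, by simpa [hi] using h⟩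
    suffices hle : _ ≤ Ideal.comap (Ideal.Quotient.mk (relIdealP n k))
      (Ideal.span {eps n k 0 ^ j}) from hle hf
    rw [Ideal.span_le]
    rintro _ ⟨i, rfl⟩
    simp only [SetLike.mem_coe, Ideal.mem_comap]
    split_ifs with h0
    · rw [h0, map_pow]
      exact Ideal.mem_span_singleton_self _
    · have : (X i ^ 2 ^ k ((i : ℕ) + 1) : MvPolynomial _ (ZMod 2)) ∈ relIdealP n k :=
        Ideal.subset_span ⟨i, by simp only [Fin.val_eq_zero_iff, h0, if_false]⟩
      rw [Ideal.Quotient.eq_zero_iff_mem.2 this]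
      exact zero_mem _

theorem eps_zero_pow_dvd_of_mul {i j : ℕ} (hij : i + j ≤ n) {p : P n k}
    (h : eps n k 0 ^ (i + j) ∣ eps n k 0 ^ i * p) : eps n k 0 ^ j ∣ p := by
  obtain ⟨f, rfl⟩ := Ideal.Quotient.mk_surjective p
  rw [← Ideal.mem_span_singleton] at h ⊢
  rw [show eps n k 0 ^ i * Ideal.Quotient.mk (relIdealP n k) f =
      Ideal.Quotient.mk (relIdealP n k) (X 0 ^ i * f) by rw [map_mul, map_pow, eps],
    mk_mem_span_eps_zero_pow_iff hij] at h
  rw [mk_mem_span_eps_zero_pow_iff (by omega)]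
  intro m hm
  have := h (Finsupp.single 0 i + m) (by
    rw [mem_support_iff, X_pow_eq_monomial, coeff_monomial_mul, one_mul]
    exact mem_support_iff.1 hm)
  refine this.imp (fun h => ?_) fun ⟨l, hl, h⟩ => ⟨l, hl, ?_⟩
  · simpa using h
  · simpa [Finsupp.single_eq_of_ne hl] using h

theorem eps_zero_pow_eq_zero {j : ℕ} (hj : n ≤ j) : eps n k 0 ^ j = 0 := by
  refine pow_eq_zero_of_le hj ?_
  rw [eps, ← map_pow, Ideal.Quotient.eq_zero_iff_mem]
  exact Ideal.subset_span ⟨0, by simp⟩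

theorem eps_pow_eq_zero {i : Fin (n / 2 + 1)} (hi : i ≠ 0) :
    eps n k i ^ 2 ^ k ((i : ℕ) + 1) = 0 := by
  rw [eps, ← map_pow, Ideal.Quotient.eq_zero_iff_mem]
  exact Ideal.subset_span ⟨i, by simp only [Fin.val_eq_zero_iff, hi, if_false]⟩

end Quotient

section Invariants

variable {n : ℕ} {k : ℕ → ℕ} {τ : P n k →ₐ[ZMod 2] P n k}

theorem mem_Pfix {p : P n k} : p ∈ Pfix n k τ ↔ τ p = p := Iff.rfl

theorem two_eq_zero_P : (2 : P n k) = 0 := by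
  have h : (2 : ZMod 2) = 0 := rfl
  rw [← map_ofNat (algebraMap (ZMod 2) (P n k)) 2, h, map_zero]

/-- The invariant elements `ε̄₂² + ε̄₁ε̄₂`, `ε̄_{j+2} + ε̄₁^{2j}ε̄₂` and, at the last index,
`ε̄₁^{n-1}ε̄₂`. -/
noncomputable def invGen (n : ℕ) (k : ℕ → ℕ) (j : Fin (n / 2 + 1)) : P n k :=
  if (j : ℕ) = n / 2 then eps n k 0 ^ (n - 1) * eps n k 1
  else if (j : ℕ) = 0 then eps n k 1 ^ 2 + eps n k 0 * eps n k 1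
  else eps n k (j + 1) + eps n k 0 ^ (2 * (j : ℕ)) * eps n k 1

theorem val_add_one {j : Fin (n / 2 + 1)} (hj : (j : ℕ) ≠ n / 2) :
    ((j + 1 : Fin (n / 2 + 1)) : ℕ) = j + 1 :=
  Fin.val_add_one_of_lt (Fin.lt_def.2 (by have := j.2; simp; omega))

theorem val_one (hn : 2 ≤ n) : ((1 : Fin (n / 2 + 1)) : ℕ) = 1 := by
  rw [Fin.val_one']
  exact Nat.mod_eq_of_lt (by omega)

theorem map_eps_one (hn : 2 ≤ n)
    (hτ : ∀ i : Fin (n / 2 + 1), 1 ≤ (i : ℕ) →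
      τ (eps n k i) = eps n k i + eps n k 0 ^ (2 * (i : ℕ) - 1)) :
    τ (eps n k 1) = eps n k 1 + eps n k 0 := by
  have := hτ 1 (val_one hn).ge
  rwa [val_one hn, pow_one] at this

theorem invGen_mem_Pfix (hn : 2 ≤ n) (hτ0 : τ (eps n k 0) = eps n k 0)
    (hτ : ∀ i : Fin (n / 2 + 1), 1 ≤ (i : ℕ) →
      τ (eps n k i) = eps n k i + eps n k 0 ^ (2 * (i : ℕ) - 1))
    (j : Fin (n / 2 + 1)) : invGen n k j ∈ Pfix n k τ := by
  have h1 := map_eps_one hn hτ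
  have h2 := two_eq_zero_P (n := n) (k := k)
  rw [mem_Pfix, invGen]
  split_ifs with hl h0
  · have h := eps_zero_pow_eq_zero (n := n) (k := k) le_rfl
    simp only [map_mul, map_pow, hτ0, h1]
    rw [mul_add, ← pow_succ, Nat.sub_add_cancel (by omega), h, add_zero]
  · simp only [map_add, map_mul, map_pow, hτ0, h1]
    linear_combination (eps n k 0 * eps n k 1 + eps n k 0 ^ 2) * h2
  · simp only [map_add, map_mul, map_pow, hτ0, h1,
      hτ (j + 1) (by rw [val_add_one hl]; omega), val_add_one hl]
    rw [show 2 * ((j : ℕ) + 1) - 1 = 2 * j + 1 by omega]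
    linear_combination eps n k 0 ^ (2 * (j : ℕ) + 1) * h2

theorem eps_zero_dvd_map_sub (hτ0 : τ (eps n k 0) = eps n k 0)
    (hτ : ∀ i : Fin (n / 2 + 1), 1 ≤ (i : ℕ) →
      τ (eps n k i) = eps n k i + eps n k 0 ^ (2 * (i : ℕ) - 1))
    (p : P n k) : eps n k 0 ∣ τ p - p := by
  suffices h : (Ideal.Quotient.mkₐ (ZMod 2) (Ideal.span {eps n k 0})).comp τ =
      Ideal.Quotient.mkₐ (ZMod 2) (Ideal.span {eps n k 0}) by
    rw [← Ideal.mem_span_singleton, ← Ideal.Quotient.eq]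
    exact DFunLike.congr_fun h p
  refine Ideal.Quotient.algHom_ext _ (MvPolynomial.algHom_ext fun i => ?_)
  change Ideal.Quotient.mk (Ideal.span {eps n k 0}) (τ (eps n k i)) =
    Ideal.Quotient.mk (Ideal.span {eps n k 0}) (eps n k i)
  rw [Ideal.Quotient.eq]
  rw [Ideal.mem_span_singleton]
  rcases Nat.eq_zero_or_pos (i : ℕ) with h0 | h0
  · rw [Fin.ext (a := i) (b := 0) h0, hτ0, sub_self]
    exact dvd_zero _
  · rw [hτ i h0, add_sub_cancel_left]
    exact dvd_pow_self _ (by omega)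

/-- The algebra map from the polynomial ring to `P` with values `invGen`. -/
noncomputable def invHom (n : ℕ) (k : ℕ → ℕ) :
    MvPolynomial (Fin (n / 2 + 1)) (ZMod 2) →ₐ[ZMod 2] P n k :=
  aeval (invGen n k)

theorem map_invHom (hn : 2 ≤ n) (hτ0 : τ (eps n k 0) = eps n k 0)
    (hτ : ∀ i : Fin (n / 2 + 1), 1 ≤ (i : ℕ) →
      τ (eps n k i) = eps n k i + eps n k 0 ^ (2 * (i : ℕ) - 1))
    (f : MvPolynomial (Fin (n / 2 + 1)) (ZMod 2)) :
    τ (invHom n k f) = invHom n k f := by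
  refine DFunLike.congr_fun (?_ : τ.comp (invHom n k) = invHom n k) f
  refine MvPolynomial.algHom_ext fun j => ?_
  simpa [invHom] using mem_Pfix.1 <| invGen_mem_Pfix hn hτ0 hτ j

theorem exists_eq_invHom_add (p : P n k) :
    ∃ f g q, p = invHom n k f + invHom n k g * eps n k 1 + eps n k 0 * q := by
  have h2 := two_eq_zero_P (n := n) (k := k)
  obtain ⟨p, rfl⟩ := Ideal.Quotient.mk_surjective p
  induction p using MvPolynomial.induction_on with
  | C c => exact ⟨C c, 0, 0, by
      simp only [map_zero, zero_mul, mul_zero, add_zero]; exact ((invHom n k).commutes c).symm⟩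
  | add p q hp hq =>
    obtain ⟨f, g, q, h⟩ := hp
    obtain ⟨f', g', q', h'⟩ := hq
    exact ⟨f + f', g + g', q + q', by rw [map_add, map_add, map_add, h, h']; ring⟩
  | mul_X p i hp =>
    obtain ⟨f, g, q, h⟩ := hp
    rw [map_mul, h, ← eps]
    obtain ⟨j, rfl⟩ : ∃ j, i = j + 1 := ⟨i - 1, by simp⟩
    by_cases hl : (j : ℕ) = n / 2
    · have hj : j + 1 = 0 := by
        rw [show j = Fin.last _ from Fin.ext hl, Fin.last_add_one]
      rw [hj]
      exact ⟨0, 0, invHom n k f + invHom n k g * eps n k 1 + eps n k 0 * q, by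
        simp only [map_zero]; ring⟩
    by_cases h0 : (j : ℕ) = 0
    · have hj : j = 0 := Fin.ext h0
      subst hj
      have hX : invHom n k (X 0) = eps n k 1 ^ 2 + eps n k 0 * eps n k 1 := by
        simp only [invHom, aeval_X, invGen, if_neg hl, if_pos h0]
      rw [zero_add]
      refine ⟨g * X 0, f, q * eps n k 1 + invHom n k g * eps n k 1, ?_⟩
      rw [map_mul, hX]
      linear_combination -(invHom n k g * eps n k 0 * eps n k 1) * h2
    · have hX : invHom n k (X j) = eps n k (j + 1) + eps n k 0 ^ (2 * (j : ℕ)) * eps n k 1 := by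
        simp only [invHom, aeval_X, invGen, if_neg hl, if_neg h0]
      obtain ⟨t, ht⟩ : ∃ t, 2 * (j : ℕ) = t + 1 := ⟨2 * j - 1, by omega⟩
      refine ⟨f * X j, g * X j, q * eps n k (j + 1) -
        (invHom n k f + invHom n k g * eps n k 1) * eps n k 0 ^ t * eps n k 1, ?_⟩
      rw [map_mul, map_mul, hX, ht]
      ring

theorem invHom_X_last :
    invHom n k (X (Fin.last (n / 2))) = eps n k 0 ^ (n - 1) * eps n k 1 := by
  simp [invHom, invGen]

/-- If `ε̄₁ⁱ p` is invariant, it agrees with a value of `invHom` up to a multiple of `ε̄₁` by an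
invariant element. -/
theorem exists_eps_zero_pow_mul_eq (hn : 2 ≤ n) (hτ0 : τ (eps n k 0) = eps n k 0)
    (hτ : ∀ i : Fin (n / 2 + 1), 1 ≤ (i : ℕ) →
      τ (eps n k i) = eps n k i + eps n k 0 ^ (2 * (i : ℕ) - 1))
    {i : ℕ} (hi : i ≤ n - 1) (p : P n k)
    (hp : eps n k 0 ^ i * (τ p - p) = 0) :
    ∃ f v, τ v = v ∧ eps n k 0 ^ i * p = invHom n k f + eps n k 0 * v := by
  induction hi using Nat.decreasingInduction generalizing p with
  | self =>
    obtain ⟨f, g, q, h⟩ := exists_eq_invHom_add p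
    refine ⟨g * X (Fin.last _), eps n k 0 ^ (n - 2) * invHom n k f, ?_, ?_⟩
    · rw [map_mul, map_pow, hτ0, map_invHom hn hτ0 hτ]
    · have h0 := eps_zero_pow_eq_zero (n := n) (k := k) le_rfl
      obtain ⟨t, rfl⟩ : ∃ t, n = t + 2 := ⟨n - 2, by omega⟩
      rw [map_mul, invHom_X_last, h]
      simp only [Nat.add_sub_cancel, show t + 2 - 1 = t + 1 by omega]
      linear_combination q * h0
  | of_succ i hi ih =>
    obtain ⟨f, g, q, h⟩ := exists_eq_invHom_add p
    obtain ⟨r, hr⟩ := eps_zero_dvd_map_sub hτ0 hτ q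
    have hg : eps n k 0 ^ 1 ∣ invHom n k g := by
      refine eps_zero_pow_dvd_of_mul (i := i + 1) (by omega) ⟨-r, ?_⟩
      rw [h] at hp
      simp only [map_add, map_mul, map_invHom hn hτ0 hτ, hτ0, map_eps_one hn hτ] at hp
      linear_combination hp - eps n k 0 ^ (i + 1) * hr
    obtain ⟨g', hg'⟩ := hg
    have hpf : p = invHom n k f + eps n k 0 * (g' * eps n k 1 + q) := by
      rw [h, hg']; ring
    obtain ⟨f', v, hv, hfv⟩ := ih (g' * eps n k 1 + q) (by
      rw [hpf] at hp
      simp only [map_add, map_mul, map_invHom hn hτ0 hτ, hτ0] at hp ⊢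
      linear_combination hp)
    rcases Nat.eq_zero_or_pos i with rfl | hi0
    · refine ⟨f + f', v, hv, ?_⟩
      rw [map_add]
      linear_combination hpf + hfv
    · obtain ⟨t, rfl⟩ : ∃ t, i = t + 1 := ⟨i - 1, by omega⟩
      refine ⟨f', v + eps n k 0 ^ t * invHom n k f, ?_, ?_⟩
      · rw [map_add, hv, map_mul, map_pow, hτ0, map_invHom hn hτ0 hτ]
      · linear_combination eps n k 0 ^ (t + 1) * hpf + hfv

/-- Modulo `ε̄₁`, the map `invHom` is induced by `e₂ ↦ ε₂²`, `e_i ↦ ε_i` and `x ↦ ε₁`. -/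
theorem eps_zero_dvd_invHom_sub (hn : 2 ≤ n) (f : MvPolynomial (Fin (n / 2 + 1)) (ZMod 2)) :
    eps n k 0 ∣ invHom n k f - Ideal.Quotient.mk (relIdealP n k)
      (aeval (R := ZMod 2) (fun j : Fin (n / 2 + 1) =>
        (X (Equiv.addRight 1 j) : MvPolynomial (Fin (n / 2 + 1)) (ZMod 2)) ^
          (if j = 0 then 2 else 1)) f) := by
  rw [← Ideal.mem_span_singleton, ← Ideal.Quotient.eq]
  refine DFunLike.congr_fun (?_ :
    (Ideal.Quotient.mkₐ (ZMod 2) (Ideal.span {eps n k 0})).comp (invHom n k) =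
    ((Ideal.Quotient.mkₐ (ZMod 2) (Ideal.span {eps n k 0})).comp
      (Ideal.Quotient.mkₐ (ZMod 2) (relIdealP n k))).comp (aeval _)) f
  refine MvPolynomial.algHom_ext fun j => ?_
  simp only [AlgHom.comp_apply, invHom, aeval_X, Ideal.Quotient.mkₐ_eq_mk]
  rw [Ideal.Quotient.eq, Ideal.mem_span_singleton, map_pow, ← eps, invGen,
    show Equiv.addRight 1 j = j + 1 from rfl]
  split_ifs with hl h0 h0 h0 h0
  · simp [h0] at hl; omega
  · rw [show j = Fin.last _ from Fin.ext hl, Fin.last_add_one, pow_one]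
    exact dvd_sub (Dvd.dvd.mul_right (dvd_pow_self _ (by omega)) _) dvd_rfl
  · exact ⟨eps n k 1, by rw [h0, zero_add]; ring⟩
  · exact absurd (Fin.ext (by simpa using ‹(j : ℕ) = 0›)) h0
  · simp [h0] at *
  · rw [pow_one, add_sub_cancel_left]
    exact Dvd.dvd.mul_right (dvd_pow_self _ (by omega)) _

theorem exists_eq_add_X_last_mul (hn : 2 ≤ n) (hk2 : 1 ≤ k 2)
    {f : MvPolynomial (Fin (n / 2 + 1)) (ZMod 2)} (hf : eps n k 0 ∣ invHom n k f) :
    ∃ r ∈ relIdealOdd n k, ∃ g, f = r + g * X (Fin.last (n / 2)) := by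
  have h := (dvd_sub_right hf).1 (eps_zero_dvd_invHom_sub hn f)
  rw [← pow_one (eps n k 0), ← Ideal.mem_span_singleton,
    mk_mem_span_eps_zero_pow_iff (by omega)] at h
  have hmem : f ∈ Ideal.span (Set.range fun j : Fin (n / 2 + 1) =>
      (X j : MvPolynomial (Fin (n / 2 + 1)) (ZMod 2)) ^ (if (j : ℕ) = n / 2 then 1
        else if (j : ℕ) = 0 then 2 ^ (k 2 - 1) else 2 ^ k ((j : ℕ) + 2))) := by
    rw [mem_span_range_X_pow_iff]
    intro m hm
    obtain ⟨m', hm', hmm⟩ := exists_mem_support_aeval_X_pow (Equiv.addRight 1)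
      (fun j : Fin (n / 2 + 1) => if j = 0 then 2 else 1) (fun j => by split_ifs <;> simp) f hm
    rcases h m' hm' with h | ⟨i, hi, h⟩
    · have := hmm (Fin.last _)
      rw [show Equiv.addRight 1 (Fin.last (n / 2)) = 0 from Fin.last_add_one _,
        if_neg (fun h => by simp [Fin.ext_iff] at h; omega), one_mul] at this
      exact ⟨Fin.last _, by simpa [← this] using h⟩
    · obtain ⟨j, rfl⟩ : ∃ j, i = j + 1 := ⟨i - 1, by simp⟩
      have hl : (j : ℕ) ≠ n / 2 := fun hl => hi (by
        rw [show j = Fin.last _ from Fin.ext hl, Fin.last_add_one])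
      have := hmm j
      rw [show Equiv.addRight 1 j = j + 1 from rfl] at this
      rw [this, val_add_one hl] at h
      refine ⟨j, ?_⟩
      rw [if_neg hl]
      by_cases h0 : j = 0
      · subst h0
        obtain ⟨t, ht⟩ : ∃ t, k 2 = t + 1 := ⟨k 2 - 1, by omega⟩
        simp only [Fin.val_zero, zero_add, Nat.reduceAdd, if_true, ht, pow_succ] at h ⊢
        simp only [Nat.add_sub_cancel]
        omega
      · rw [if_neg (fun h : (j : ℕ) = 0 => h0 (Fin.ext h))]
        simpa [h0] using h
  have hle : Ideal.span (Set.range fun j : Fin (n / 2 + 1) =>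
      (X j : MvPolynomial (Fin (n / 2 + 1)) (ZMod 2)) ^ (if (j : ℕ) = n / 2 then 1
        else if (j : ℕ) = 0 then 2 ^ (k 2 - 1) else 2 ^ k ((j : ℕ) + 2))) ≤
      relIdealOdd n k ⊔ Ideal.span {X (Fin.last (n / 2))} := by
    rw [Ideal.span_le]
    rintro _ ⟨j, rfl⟩
    by_cases hl : (j : ℕ) = n / 2
    · refine Ideal.mem_sup_right ?_
      simp only [if_pos hl, pow_one]
      rw [show j = Fin.last _ from Fin.ext hl]
      exact Ideal.mem_span_singleton_self _
    · refine Ideal.mem_sup_left (Ideal.subset_span ⟨j, ?_⟩)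
      simp only [if_neg hl]
      split_ifs <;> rfl
  obtain ⟨r, hr, y, hy, rfl⟩ := Submodule.mem_sup.1 (hle hmem)
  obtain ⟨g, rfl⟩ := Ideal.mem_span_singleton'.1 hy
  exact ⟨r, hr, g, rfl⟩

theorem eps_zero_dvd_of_mul_invHom_X_last (hn : 2 ≤ n) (hτ0 : τ (eps n k 0) = eps n k 0)
    (hτ : ∀ i : Fin (n / 2 + 1), 1 ≤ (i : ℕ) →
      τ (eps n k i) = eps n k i + eps n k 0 ^ (2 * (i : ℕ) - 1))
    {p v : P n k} (hp : τ p = p) (hv : τ v = v)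
    (h : p * (eps n k 0 ^ (n - 1) * eps n k 1) = eps n k 0 * v) : eps n k 0 ∣ p := by
  have h0 := eps_zero_pow_eq_zero (n := n) (k := k) le_rfl
  obtain ⟨t, ht⟩ : ∃ t, n = t + 2 := ⟨n - 2, by omega⟩
  rw [show n - 1 = t + 1 by omega] at h
  obtain ⟨q, hq⟩ : eps n k 0 ^ (t + 1) ∣ v - eps n k 0 ^ t * p * eps n k 1 :=
    eps_zero_pow_dvd_of_mul (i := 1) (by omega) ⟨0, by linear_combination -h⟩
  obtain ⟨r, hr⟩ := eps_zero_dvd_map_sub hτ0 hτ q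
  have hq' := congrArg τ hq
  simp only [map_sub, map_mul, map_pow, hv, hτ0, hp, map_eps_one hn hτ] at hq'
  rw [← pow_one (eps n k 0)]
  refine eps_zero_pow_dvd_of_mul (i := t + 1) (by omega) ⟨-r, ?_⟩
  linear_combination hq - hq' - eps n k 0 ^ (t + 1) * hr

end Invariants

section Relations

variable {n : ℕ} {k : ℕ → ℕ} {τ : P n k →ₐ[ZMod 2] P n k}

/-- The defining relations of the target hold in `P^τ` up to multiples of `ε̄₁`. -/
theorem exists_invHom_eq_of_mem_relIdealOdd (hn : 2 ≤ n) (hodd : Odd n)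
    (hk : ∀ i : ℕ, 2 ≤ i → i ≤ n / 2 + 1 →
      (2 * i - 3) * 2 ^ k i ≤ 2 * n - 1 ∧ 2 * n - 1 < (2 * i - 3) * 2 ^ (k i + 1))
    (hτ0 : τ (eps n k 0) = eps n k 0)
    (hτ : ∀ i : Fin (n / 2 + 1), 1 ≤ (i : ℕ) →
      τ (eps n k i) = eps n k i + eps n k 0 ^ (2 * (i : ℕ) - 1))
    {f : MvPolynomial (Fin (n / 2 + 1)) (ZMod 2)} (hf : f ∈ relIdealOdd n k) :
    ∃ v, τ v = v ∧ invHom n k f = eps n k 0 * v := by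
  have h2 := two_eq_zero_P (n := n) (k := k)
  have h1 := map_eps_one hn hτ
  obtain ⟨c, hc⟩ := hodd
  -- Parity of `n` makes the inequality `n ≤ (2i - 3) 2 ^ kᵢ` strict.
  have hlt : ∀ j, j + 1 ≤ n / 2 → ∃ t, k (j + 2) = t + 1 ∧ n + 1 ≤ (2 * j + 1) * 2 ^ (t + 1) := by
    intro j hj
    have h := (hk (j + 2) (by omega) (by omega)).2
    rw [show 2 * (j + 2) - 3 = 2 * j + 1 by omega] at h
    rcases hkj : k (j + 2) with _ | t
    · rw [hkj] at h
      omega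
    · refine ⟨t, rfl, ?_⟩
      rw [hkj, pow_succ, ← mul_assoc] at h
      have : (2 * j + 1) * 2 ^ (t + 1) = 2 * ((2 * j + 1) * 2 ^ t) := by ring
      omega
  induction hf using Submodule.span_induction with
  | zero => exact ⟨0, map_zero τ, by simp⟩
  | add f g _ _ hf hg =>
    obtain ⟨v, hv, h⟩ := hf
    obtain ⟨w, hw, h'⟩ := hg
    exact ⟨v + w, by rw [map_add, hv, hw], by rw [map_add, h, h', mul_add]⟩
  | smul r f _ hf =>
    obtain ⟨v, hv, h⟩ := hf
    refine ⟨invHom n k r * v, by rw [map_mul, map_invHom hn hτ0 hτ, hv], ?_⟩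
    rw [smul_eq_mul, map_mul, h]
    ring
  | mem f hf =>
    obtain ⟨j, rfl⟩ := hf
    dsimp only
    split_ifs with hl h0
    · refine ⟨0, map_zero τ, ?_⟩
      rw [map_pow, show j = Fin.last _ from Fin.ext hl, invHom_X_last, mul_pow, ← pow_mul,
        eps_zero_pow_eq_zero (by omega), zero_mul, mul_zero]
    · obtain ⟨t, ht, hlt⟩ := hlt 0 (by omega)
      rw [zero_add] at ht
      obtain ⟨v, hv, h⟩ := exists_pow_two_pow_succ_eq h2 (τ := (τ : P n k →+* P n k)) hτ0 h1 t
      have hb := eps_pow_eq_zero (k := k) (i := (1 : Fin (n / 2 + 1)))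
        (fun h => by have := val_one hn; simp [h] at this)
      rw [val_one hn, ht, h, eps_zero_pow_eq_zero (j := 2 ^ (t + 1) - 1) (by omega)] at hb
      refine ⟨-v, by rw [map_neg]; exact congrArg _ hv, ?_⟩
      rw [map_pow, show k 2 - 1 = t by omega, invHom, aeval_X, invGen, if_neg hl, if_pos h0]
      linear_combination hb
    · obtain ⟨t, ht, hlt⟩ := hlt j (by omega)
      obtain ⟨v, hv, h⟩ := exists_pow_two_pow_succ_eq h2 (τ := (τ : P n k →+* P n k)) hτ0 h1 t
      have hv : τ v = v := hv
      have hb := eps_pow_eq_zero (k := k) (i := j + 1)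
        (fun h => by have := val_add_one hl; simp [h] at this)
      obtain ⟨d, hd⟩ : ∃ d, 2 * (j : ℕ) * 2 ^ (t + 1) = d + 1 :=
        Nat.exists_eq_succ_of_ne_zero (by positivity)
      have hz : eps n k 0 ^ (d + 1) * eps n k 0 ^ (2 ^ (t + 1) - 1) = 0 := by
        rw [← pow_add]
        refine eps_zero_pow_eq_zero ?_
        rw [add_mul, hd] at hlt
        omega
      rw [val_add_one hl, show (j : ℕ) + 1 + 1 = j + 2 from rfl, ht] at hb
      refine ⟨eps n k 0 ^ d *
        ((eps n k 1 ^ 2 + eps n k 0 * eps n k 1) ^ 2 ^ t + eps n k 0 * v), ?_, ?_⟩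
      · simp only [map_mul, map_add, map_pow, hτ0, h1, hv]
        congr 3
        linear_combination (eps n k 0 * eps n k 1 + eps n k 0 ^ 2) * h2
      · rw [map_pow, ht, invHom, aeval_X, invGen, if_neg hl, if_neg h0,
          add_pow_two_pow_of_two_eq_zero h2, hb, mul_pow, ← pow_mul, hd, h]
        linear_combination eps n k 1 * hz

end Relations

/-- Fix `n ≥ 2`, `s = n/2 + 1`, `k i` as in the context, the algebra
`P = 𝔽₂[ε₁,…,ε_s]/(ε₁ⁿ, ε₂^{2^{k₂}}, …, ε_s^{2^{k_s}})` and the involution `τ` with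
`τ(ε̄₁) = ε̄₁`, `τ(ε̄ᵢ) = ε̄ᵢ + ε̄₁^{2i−3}`; `Pfix n k τ` is the invariant subalgebra `P^τ`.
Suppose `n` is odd. Then there is an isomorphism of `𝔽₂`-algebras
`P^τ/(ε̄₁) ≅ 𝔽₂[e₂,…,e_s,x]/(e₂^{2^{k₂−1}}, e₃^{2^{k₃}}, …, e_s^{2^{k_s}}, x²)`
(formulated below in the other direction) sending `e₂` to the class of `ε̄₂² + ε̄₁ε̄₂`,
`e_i` to the class of `ε̄_i + ε̄₁^{2i−4}ε̄₂` (`3 ≤ i ≤ s`), and `x` to the class of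
`ε̄₁^{n−1}ε̄₂`. Here `e1 : P^τ` denotes the element with underlying value `ε̄₁`. -/
theorem invariant_subalgebra_mod_eps1_of_odd
    (n : ℕ) (hn : 2 ≤ n) (hodd : Odd n) (k : ℕ → ℕ)
    (hk : ∀ i : ℕ, 2 ≤ i → i ≤ n / 2 + 1 →
      (2 * i - 3) * 2 ^ k i ≤ 2 * n - 1 ∧ 2 * n - 1 < (2 * i - 3) * 2 ^ (k i + 1))
    (τ : P n k →ₐ[ZMod 2] P n k)
    (hτ0 : τ (eps n k 0) = eps n k 0)
    (hτ : ∀ i : Fin (n / 2 + 1), 1 ≤ (i : ℕ) →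
      τ (eps n k i) = eps n k i + eps n k 0 ^ (2 * (i : ℕ) - 1)) :
    ∀ e1 : Pfix n k τ, (e1 : P n k) = eps n k 0 →
    ∃ iso : (MvPolynomial (Fin (n / 2 + 1)) (ZMod 2) ⧸ relIdealOdd n k) ≃ₐ[ZMod 2]
        (Pfix n k τ ⧸ (Ideal.span {e1} : Ideal (Pfix n k τ))),
      (∀ u : Pfix n k τ, (u : P n k) = eps n k 1 ^ 2 + eps n k 0 * eps n k 1 →
        iso (Ideal.Quotient.mk (relIdealOdd n k) (X 0)) =
          Ideal.Quotient.mk (Ideal.span {e1}) u) ∧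
      (∀ j : Fin (n / 2 + 1), 1 ≤ (j : ℕ) → (hj : (j : ℕ) ≤ n / 2 - 1) →
        ∀ u : Pfix n k τ,
          (u : P n k) = eps n k ⟨(j : ℕ) + 1, by omega⟩
              + eps n k 0 ^ (2 * (j : ℕ)) * eps n k 1 →
          iso (Ideal.Quotient.mk (relIdealOdd n k) (X j)) =
            Ideal.Quotient.mk (Ideal.span {e1}) u) ∧
      (∀ u : Pfix n k τ, (u : P n k) = eps n k 0 ^ (n - 1) * eps n k 1 →
        iso (Ideal.Quotient.mk (relIdealOdd n k) (X ⟨n / 2, by omega⟩)) =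
          Ideal.Quotient.mk (Ideal.span {e1}) u) := by
  intro e1 he1
  have hk2 : 1 ≤ k 2 := by
    have h := (hk 2 le_rfl (by omega)).2
    by_contra! h0
    rw [Nat.lt_one_iff.1 h0] at h
    have := hodd.pos
    omega
  let F : MvPolynomial (Fin (n / 2 + 1)) (ZMod 2) →ₐ[ZMod 2] Pfix n k τ :=
    (invHom n k).codRestrict (Pfix n k τ) (map_invHom hn hτ0 hτ)
  have hF : ∀ f, (F f : P n k) = invHom n k f := fun f => rfl
  have hmem : ∀ u : Pfix n k τ, u ∈ Ideal.span {e1} ↔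
      ∃ v, τ v = v ∧ (u : P n k) = eps n k 0 * v := by
    intro u
    rw [Ideal.mem_span_singleton]
    constructor
    · rintro ⟨v, rfl⟩
      exact ⟨v, v.2, by rw [← he1]; rfl⟩
    · rintro ⟨v, hv, h⟩
      exact ⟨⟨v, hv⟩, Subtype.ext (by rw [h, ← he1]; rfl)⟩
  let φ := (Ideal.Quotient.mkₐ (ZMod 2) (Ideal.span {e1})).comp F
  have hφ : ∀ f, φ f = 0 ↔ ∃ v, τ v = v ∧ invHom n k f = eps n k 0 * v := fun f =>
    Ideal.Quotient.eq_zero_iff_mem.trans (hmem (F f))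
  have hφ0 : ∀ f ∈ relIdealOdd n k, φ f = 0 := fun f hf =>
    (hφ f).2 (exists_invHom_eq_of_mem_relIdealOdd hn hodd hk hτ0 hτ hf)
  have hker : ∀ f, φ f = 0 → f ∈ relIdealOdd n k := by
    intro f hf
    obtain ⟨v, -, hfv⟩ := (hφ f).1 hf
    obtain ⟨r, hr, g, rfl⟩ := exists_eq_add_X_last_mul hn hk2 ⟨v, hfv⟩
    rw [map_add, hφ0 r hr, zero_add] at hf
    obtain ⟨w, hw, hgw⟩ := (hφ _).1 hf
    rw [map_mul, invHom_X_last] at hgw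
    obtain ⟨r', hr', g', rfl⟩ := exists_eq_add_X_last_mul hn hk2
      (eps_zero_dvd_of_mul_invHom_X_last hn hτ0 hτ (map_invHom hn hτ0 hτ g) hw hgw)
    have hX : (X (Fin.last (n / 2)) ^ 2 : MvPolynomial (Fin (n / 2 + 1)) (ZMod 2)) ∈
        relIdealOdd n k := Ideal.subset_span ⟨Fin.last _, by simp⟩
    rw [add_mul, mul_assoc, ← pow_two]
    exact add_mem hr (add_mem (Ideal.mul_mem_right _ _ hr') (Ideal.mul_mem_left _ _ hX))
  have hbij : Function.Bijective (Ideal.Quotient.liftₐ (relIdealOdd n k) φ hφ0) := by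
    constructor
    · rw [injective_iff_map_eq_zero]
      intro p hp
      obtain ⟨f, rfl⟩ := Ideal.Quotient.mk_surjective p
      exact Ideal.Quotient.eq_zero_iff_mem.2 (hker f hp)
    · intro p
      obtain ⟨u, rfl⟩ := Ideal.Quotient.mk_surjective p
      obtain ⟨f, v, hv, h⟩ := exists_eps_zero_pow_mul_eq hn hτ0 hτ (Nat.zero_le _) (u : P n k)
        (by rw [mem_Pfix.1 u.2, sub_self, mul_zero])
      refine ⟨Ideal.Quotient.mk _ f, (Ideal.Quotient.eq.2 ((hmem _).2 ⟨-v, ?_, ?_⟩) :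
        Ideal.Quotient.mk (Ideal.span {e1}) (F f) = Ideal.Quotient.mk (Ideal.span {e1}) u)⟩
      · rw [map_neg, hv]
      · rw [AddSubgroupClass.coe_sub, hF]
        linear_combination -h
  have hgen : ∀ (j : Fin (n / 2 + 1)) (u : Pfix n k τ), (u : P n k) = invGen n k j →
      AlgEquiv.ofBijective _ hbij (Ideal.Quotient.mk (relIdealOdd n k) (X j)) =
        Ideal.Quotient.mk (Ideal.span {e1}) u := by
    intro j u hu
    have : F (X j) = u := Subtype.ext (by rw [hF, hu, invHom, aeval_X])
    rw [← this]
    rfl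
  refine ⟨AlgEquiv.ofBijective _ hbij, fun u hu => hgen _ u ?_, fun j hj hj' u hu => hgen _ u ?_,
    fun u hu => hgen _ u ?_⟩
  · rw [hu, invGen, if_neg (by simp; omega), if_pos (by simp)]
  · have hl : (j : ℕ) ≠ n / 2 := by omega
    rw [hu, invGen, if_neg hl, if_neg (by omega)]
    congr 2
    exact Fin.ext (val_add_one hl).symm
  · rw [hu, invGen, if_pos rfl]
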